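/- There exists a constant c > 0 independent of the mesh size h and the spline degree p such that for every u ∈ S: (1/2)|u|_1^2 ≤ |Q_0 u|_1^2 + |u − Q_0 u|_1^2 ≤ c |u|_1^2, and likewise c^{-1}‖u‖_{H^1}^2 ≤ ‖Q_0 u‖_{H^1}^2 + ‖u − Q_0 u‖_{H^1}^2 ≤ c ‖u‖_{H^1}^2 for the full H^1(0,1)-norm. In other words, the L2-orthogonal splitting S = S_0 ⊕ S_1, u = Q_0 u + (I − Q_0)u, is H^1-stable uniformly in h and p. -/

import Mathlib

noncomputable section

open MeasureTheory Set

namespace SplineMG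

/-- The `j`-th piece of the uniform partition of `[0,1]` into `m` subintervals of
length `h = 1/m`; the first and last pieces are extended to `-∞` resp. `+∞`
(the spline is extended polynomially outside `[0,1]`). -/
def pieceSet (m j : ℕ) : Set ℝ :=
  (if j = 0 then Iic ((1 : ℝ) / m) else Icc ((j : ℝ) / m) (((j : ℝ) + 1) / m)) ∪
  (if j = m - 1 then Ici (((m : ℝ) - 1) / m) else ∅)

/-- `u : ℝ → ℝ` belongs to the univariate spline space `S` of degree `p` and maximal
smoothness `C^{p-1}` on the uniform partition of `(0,1)` into `m` intervals of
length `h = 1/m`. -/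
def IsSpline (m p : ℕ) (u : ℝ → ℝ) : Prop :=
  ContDiffOn ℝ (p - 1 : ℕ) u (Ioo (0 : ℝ) 1) ∧
  ∀ j < m, ∃ q : Polynomial ℝ, q.natDegree ≤ p ∧ ∀ x ∈ pieceSet m j, u x = q.eval x

/-- `u` belongs to the subspace `S₀` of `S`: all odd derivatives of order `< p`
vanish at both endpoints. -/
def IsSpline0 (m p : ℕ) (u : ℝ → ℝ) : Prop :=
  IsSpline m p u ∧
  ∀ l : ℕ, 2 * l + 1 < p →
    iteratedDeriv (2 * l + 1) u 0 = 0 ∧ iteratedDeriv (2 * l + 1) u 1 = 0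

/-- The `L²(0,1)` inner product. -/
def ip0 (u v : ℝ → ℝ) : ℝ := ∫ x in Ioo (0 : ℝ) 1, u x * v x

/-- The squared `L²(0,1)` norm `‖u‖₀²`. -/
def l2normSq (u : ℝ → ℝ) : ℝ := ∫ x in Ioo (0 : ℝ) 1, u x ^ 2

/-- The `L²(0,1)` norm `‖u‖₀`. -/
def l2norm (u : ℝ → ℝ) : ℝ := Real.sqrt (l2normSq u)

/-- The squared `H¹(0,1)` seminorm `|u|₁²`. -/
def h1semiSq (u : ℝ → ℝ) : ℝ := ∫ x in Ioo (0 : ℝ) 1, deriv u x ^ 2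

/-- The `H¹(0,1)` seminorm `|u|₁`. -/
def h1semi (u : ℝ → ℝ) : ℝ := Real.sqrt (h1semiSq u)

/-- The squared full `H¹(0,1)` norm. -/
def h1normSq (u : ℝ → ℝ) : ℝ := l2normSq u + h1semiSq u

/-- `u` belongs to `S₁`, the `L²(0,1)`-orthogonal complement of `S₀` in `S`. -/
def IsSpline1 (m p : ℕ) (u : ℝ → ℝ) : Prop :=
  IsSpline m p u ∧ ∀ v, IsSpline0 m p v → ip0 u v = 0

/-- `v = Q₀ u` is the `L²(0,1)`-orthogonal projection of `u` onto `S₀`. -/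
def IsL2Proj0 (m p : ℕ) (u v : ℝ → ℝ) : Prop :=
  IsSpline0 m p v ∧ ∀ w, IsSpline0 m p w → ip0 (u - v) w = 0

/-- The component predicate: `false ↦ S₀`, `true ↦ S₁`. -/
def IsSplineC (m p : ℕ) : Bool → (ℝ → ℝ) → Prop
  | false => IsSpline0 m p
  | true => IsSpline1 m p

/-- The tensor-product spline space `S^d = S ⊗ ⋯ ⊗ S` on `(0,1)^d`. -/
def TensorSpline (d m p : ℕ) : Submodule ℝ ((Fin d → ℝ) → ℝ) :=
  Submodule.span ℝ {u | ∃ f : Fin d → ℝ → ℝ, (∀ i, IsSpline m p (f i)) ∧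
    u = fun x => ∏ i, f i (x i)}

/-- The subspace `S_α = S_{α₁} ⊗ ⋯ ⊗ S_{α_d}` of `S^d`, for `α ∈ {0,1}^d`
(`false ↦ 0`, `true ↦ 1`). -/
def TensorSplineSub (d m p : ℕ) (α : Fin d → Bool) : Submodule ℝ ((Fin d → ℝ) → ℝ) :=
  Submodule.span ℝ {u | ∃ f : Fin d → ℝ → ℝ, (∀ i, IsSplineC m p (α i) (f i)) ∧
    u = fun x => ∏ i, f i (x i)}

/-- The open unit cube `Ω = (0,1)^d`. -/
def cube (d : ℕ) : Set (Fin d → ℝ) := Set.univ.pi fun _ => Ioo (0 : ℝ) 1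

/-- The `i`-th partial derivative. -/
def pd (d : ℕ) (i : Fin d) (u : (Fin d → ℝ) → ℝ) : (Fin d → ℝ) → ℝ :=
  fun x => deriv (fun t => u (Function.update x i t)) (x i)

/-- The `L²(Ω)` inner product on the unit cube. -/
def ipd (d : ℕ) (u v : (Fin d → ℝ) → ℝ) : ℝ := ∫ x in cube d, u x * v x

/-- The squared `L²(Ω)` norm. -/
def l2normSqD (d : ℕ) (u : (Fin d → ℝ) → ℝ) : ℝ := ∫ x in cube d, u x ^ 2

/-- The bilinear form `a(u,v) = ∫_Ω (∇u·∇v + uv) dx`. -/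
def aForm (d : ℕ) (u v : (Fin d → ℝ) → ℝ) : ℝ :=
  ∫ x in cube d, (∑ i, pd d i u x * pd d i v x) + u x * v x

/-- The squared `H¹(Ω)` seminorm. -/
def h1semiSqD (d : ℕ) (u : (Fin d → ℝ) → ℝ) : ℝ :=
  ∫ x in cube d, ∑ i, pd d i u x ^ 2

/-- The squared full `H¹(Ω)` norm. -/
def h1normSqD (d : ℕ) (u : (Fin d → ℝ) → ℝ) : ℝ := l2normSqD d u + h1semiSqD d u

/-- `v = Q_α u` is the `L²(Ω)`-orthogonal projection of `u` onto `S_α`. -/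
def IsL2ProjSub (d m p : ℕ) (α : Fin d → Bool) (u v : (Fin d → ℝ) → ℝ) : Prop :=
  v ∈ TensorSplineSub d m p α ∧ ∀ w ∈ TensorSplineSub d m p α, ipd d (u - v) w = 0

/-- The coarse tensor-product spline space `(S_c)^d` (with `m/2` knot spans of
width `2h` per direction). -/
def TensorSplineCoarse (d m p : ℕ) : Submodule ℝ ((Fin d → ℝ) → ℝ) :=
  TensorSpline d (m / 2) p

/-- `v = T_c u` is the `a(·,·)`-orthogonal (Galerkin) projection of `u` onto `(S_c)^d`. -/
def IsGalerkinCoarseProj (d m p : ℕ) (u v : (Fin d → ℝ) → ℝ) : Prop :=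
  v ∈ TensorSplineCoarse d m p ∧ ∀ w ∈ TensorSplineCoarse d m p, aForm d (u - v) w = 0

end SplineMG

namespace SplineMG

/-!
The upper bound is the classical combination of an approximation estimate with an inverse
inequality. If `w ∈ S₀` is the `H¹`-orthogonal projection of `u`, then `Q₀ u - w ∈ S₀` satisfies
`|Q₀ u - w|₁ ≤ √12 m ‖Q₀ u - w‖₀ ≤ √12 m ‖u - w‖₀ ≤ √12 |u - w|₁`.

Both estimates are proved with constants independent of the degree by induction on the degree. In
the space of splines whose derivatives of one parity vanish at the endpoints, integration by parts
produces no boundary terms, and differentiation maps it to the space of opposite parity and one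
degree less. The inverse inequality climbs from `u'` to `u` by `|u|₁² = -(u'', u)`. The
approximation estimate climbs by Aubin–Nitsche duality: the error `r` is paired with the error of
approximating its own primitive by a spline of one degree less. The induction starts with piecewise
linear functions, where both estimates are local to the pieces.
-/

section L2

variable {α : Type*} [MeasurableSpace α] {μ : Measure α} {f g : α → ℝ}

lemma inner_toLp_toLp (hf : MemLp f 2 μ) (hg : MemLp g 2 μ) :
    inner ℝ (hf.toLp f) (hg.toLp g) = ∫ x, f x * g x ∂μ := by
  rw [L2.inner_def]
  refine integral_congr_ae ?_
  filter_upwards [hf.coeFn_toLp, hg.coeFn_toLp] with x hfx hgx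
  simp [hfx, hgx, mul_comm]

lemma norm_toLp_sq (hf : MemLp f 2 μ) : ‖hf.toLp f‖ ^ 2 = ∫ x, f x ^ 2 ∂μ := by
  rw [← real_inner_self_eq_norm_sq, inner_toLp_toLp]
  simp only [sq]

lemma sq_integral_mul_le (hf : MemLp f 2 μ) (hg : MemLp g 2 μ) :
    (∫ x, f x * g x ∂μ) ^ 2 ≤ (∫ x, f x ^ 2 ∂μ) * ∫ x, g x ^ 2 ∂μ := by
  rw [← inner_toLp_toLp hf hg, ← norm_toLp_sq hf, ← norm_toLp_sq hg, ← mul_pow, sq_le_sq]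
  exact (abs_real_inner_le_norm _ _).trans (le_abs_self _)

lemma integral_add_sq_of_integral_mul_eq_zero (hf : MemLp f 2 μ) (hg : MemLp g 2 μ)
    (hfg : ∫ x, f x * g x ∂μ = 0) :
    ∫ x, (f + g) x ^ 2 ∂μ = (∫ x, f x ^ 2 ∂μ) + ∫ x, g x ^ 2 ∂μ := by
  rw [← norm_toLp_sq hf, ← norm_toLp_sq hg, ← norm_toLp_sq (hf.add hg), MemLp.toLp_add hf hg,
    norm_add_sq_real, inner_toLp_toLp, hfg, mul_zero, add_zero]

lemma integral_add_sq_le (hf : MemLp f 2 μ) (hg : MemLp g 2 μ) :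
    ∫ x, (f + g) x ^ 2 ∂μ ≤ 2 * ((∫ x, f x ^ 2 ∂μ) + ∫ x, g x ^ 2 ∂μ) := by
  rw [← norm_toLp_sq hf, ← norm_toLp_sq hg, ← norm_toLp_sq (hf.add hg), MemLp.toLp_add hf hg]
  exact (pow_le_pow_left₀ (norm_nonneg _) (norm_add_le _ _) 2).trans add_sq_le

lemma exists_mem_forall_integral_sub_mul_eq_zero {V : Submodule ℝ (α → ℝ)}
    [FiniteDimensional ℝ V] (hV : ∀ v ∈ V, MemLp v 2 μ) (hf : MemLp f 2 μ) :
    ∃ v ∈ V, ∀ w ∈ V, ∫ x, (f - v) x * w x ∂μ = 0 := by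
  let toL2 : V →ₗ[ℝ] Lp ℝ 2 μ :=
    { toFun := fun v => (hV v v.2).toLp v
      map_add' := fun _ _ => rfl
      map_smul' := fun _ _ => rfl }
  obtain ⟨v, hv⟩ : toL2.range.starProjection (hf.toLp f) ∈ toL2.range :=
    Submodule.starProjection_apply_mem _ _
  refine ⟨v, v.2, fun w hw => ?_⟩
  rw [← inner_toLp_toLp (hf.sub (hV v v.2)) (hV w hw), MemLp.toLp_sub hf (hV v v.2)]
  change inner ℝ (hf.toLp f - toL2 v) (toL2 ⟨w, hw⟩) = 0
  rw [hv]
  exact Submodule.starProjection_inner_eq_zero _ _ ⟨_, rfl⟩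

end L2

section H1

variable {a b c d : ℝ} {u v : ℝ → ℝ}

/-- The Sobolev space `H¹(a, b)`: `u` is the absolutely continuous representative of its class, and
its weak derivative, which is the classical one almost everywhere, is square integrable. -/
structure MemH1 (u : ℝ → ℝ) (a b : ℝ) : Prop where
  absolutelyContinuous : AbsolutelyContinuousOnInterval u a b
  memLp_deriv : MemLp (deriv u) 2 (volume.restrict (Ioo a b))

lemma integral_Ioo_eq_intervalIntegral (hab : a ≤ b) (f : ℝ → ℝ) :
    ∫ x in Ioo a b, f x = ∫ x in a..b, f x := by
  rw [intervalIntegral.integral_of_le hab, integral_Ioc_eq_integral_Ioo]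

lemma memLp_Ioo_of_continuousOn_Icc (hu : ContinuousOn u (Icc a b)) :
    MemLp u 2 (volume.restrict (Ioo a b)) := by
  obtain ⟨C, hC⟩ := isCompact_Icc.exists_bound_of_continuousOn hu
  refine MemLp.of_bound
    ((hu.mono Ioo_subset_Icc_self).aestronglyMeasurable measurableSet_Ioo) C ?_
  filter_upwards [ae_restrict_mem measurableSet_Ioo] with x hx
    using hC x (Ioo_subset_Icc_self hx)

lemma memLp_two_Ioo_iff (hab : a ≤ b) :
    MemLp u 2 (volume.restrict (Ioo a b)) ↔
      IntervalIntegrable u volume a b ∧ IntervalIntegrable (fun x => u x ^ 2) volume a b := by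
  rw [intervalIntegrable_iff_integrableOn_Ioo_of_le hab,
    intervalIntegrable_iff_integrableOn_Ioo_of_le hab]
  exact ⟨fun hu => ⟨hu.integrable one_le_two, hu.integrable_sq⟩,
    fun hu => (memLp_two_iff_integrable_sq hu.1.aestronglyMeasurable).2 hu.2⟩

lemma memH1_of_contDiff (hu : ContDiff ℝ 1 u) : MemH1 u a b where
  absolutelyContinuous := hu.contDiffOn.absolutelyContinuousOnInterval
  memLp_deriv := memLp_Ioo_of_continuousOn_Icc (hu.continuous_deriv le_rfl).continuousOn

namespace MemH1

lemma memLp (hu : MemH1 u a b) : MemLp u 2 (volume.restrict (Ioo a b)) :=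
  memLp_Ioo_of_continuousOn_Icc (hu.absolutelyContinuous.continuousOn.mono Icc_subset_uIcc)

lemma mono (hu : MemH1 u a b) (hac : a ≤ c) (hcd : c ≤ d) (hdb : d ≤ b) : MemH1 u c d where
  absolutelyContinuous := hu.absolutelyContinuous.mono <| by
    rw [uIcc_of_le hcd, uIcc_of_le (hac.trans (hcd.trans hdb))]
    exact Icc_subset_Icc hac hdb
  memLp_deriv := hu.memLp_deriv.mono_measure (Measure.restrict_mono_set _ (Ioo_subset_Ioo hac hdb))

lemma ae_differentiableAt (hu : MemH1 u a b) :
    ∀ᵐ x ∂volume.restrict (Ioo a b), DifferentiableAt ℝ u x := by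
  filter_upwards [ae_restrict_of_ae hu.absolutelyContinuous.ae_differentiableAt,
    ae_restrict_mem measurableSet_Ioo] with x hux hx
  exact hux (Icc_subset_uIcc (Ioo_subset_Icc_self hx))

lemma deriv_sub_ae (hu : MemH1 u a b) (hv : MemH1 v a b) :
    deriv (u - v) =ᵐ[volume.restrict (Ioo a b)] deriv u - deriv v := by
  filter_upwards [hu.ae_differentiableAt, hv.ae_differentiableAt] with x hux hvx
  exact deriv_sub hux hvx

protected lemma sub (hu : MemH1 u a b) (hv : MemH1 v a b) : MemH1 (u - v) a b where
  absolutelyContinuous := hu.absolutelyContinuous.sub hv.absolutelyContinuous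
  memLp_deriv := (memLp_congr_ae (hu.deriv_sub_ae hv)).2 (hu.memLp_deriv.sub hv.memLp_deriv)

lemma integral_deriv_eq_sub (hu : MemH1 u a b) (hab : a ≤ b) :
    ∫ x in Ioo a b, deriv u x = u b - u a := by
  rw [integral_Ioo_eq_intervalIntegral hab, hu.absolutelyContinuous.integral_deriv_eq_sub]

lemma integral_mul_deriv (hu : MemH1 u a b) (hv : MemH1 v a b) (hab : a ≤ b) :
    ∫ x in Ioo a b, u x * deriv v x =
      u b * v b - u a * v a - ∫ x in Ioo a b, deriv u x * v x := by
  rw [integral_Ioo_eq_intervalIntegral hab, integral_Ioo_eq_intervalIntegral hab,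
    hu.absolutelyContinuous.integral_mul_deriv_eq_deriv_mul hv.absolutelyContinuous]

lemma const_add (hu : MemH1 u a b) (c : ℝ) : MemH1 (fun x => c + u x) a b where
  absolutelyContinuous :=
    (LipschitzWith.const c).lipschitzOnWith.absolutelyContinuousOnInterval.add
      hu.absolutelyContinuous
  memLp_deriv := by simpa only [deriv_const_add'] using hu.memLp_deriv

lemma congr (hv : MemH1 v a b) (hab : a ≤ b) (huv : EqOn u v (Icc a b)) : MemH1 u a b where
  absolutelyContinuous := by
    have hsub : LipschitzOnWith 0 (u - v) (uIcc a b) := by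
      rw [uIcc_of_le hab]
      intro x hx y hy
      simp [huv hx, huv hy]
    simpa using hsub.absolutelyContinuousOnInterval.add hv.absolutelyContinuous
  memLp_deriv := by
    refine (memLp_congr_ae ?_).2 hv.memLp_deriv
    filter_upwards [ae_restrict_mem measurableSet_Ioo] with x hx
    exact (huv.eventuallyEq_of_mem (Icc_mem_nhds hx.1 hx.2)).deriv_eq

end MemH1

lemma deriv_primitive_ae (hu : MemLp u 2 (volume.restrict (Ioo a b))) (hab : a ≤ b) :
    deriv (fun x => ∫ t in a..x, u t) =ᵐ[volume.restrict (Ioo a b)] u := by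
  filter_upwards [ae_restrict_of_ae ((memLp_two_Ioo_iff hab).1 hu).1.ae_hasDerivAt_integral,
    ae_restrict_mem measurableSet_Ioo] with x hux hx
  exact (hux (Icc_subset_uIcc (Ioo_subset_Icc_self hx)) a left_mem_uIcc).deriv

lemma memH1_primitive (hu : MemLp u 2 (volume.restrict (Ioo a b))) (hab : a ≤ b) :
    MemH1 (fun x => ∫ t in a..x, u t) a b where
  absolutelyContinuous :=
    ((memLp_two_Ioo_iff hab).1 hu).1.absolutelyContinuousOnInterval_intervalIntegral left_mem_uIcc
  memLp_deriv := (memLp_congr_ae (deriv_primitive_ae hu hab)).2 hu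

lemma MemH1.trans (hab : MemH1 u a b) (hbc : MemH1 u b c) (hle : a ≤ b) (hle' : b ≤ c) :
    MemH1 u a c := by
  obtain ⟨hint, hint_sq⟩ := (memLp_two_Ioo_iff hle).1 hab.memLp_deriv
  obtain ⟨hint', hint_sq'⟩ := (memLp_two_Ioo_iff hle').1 hbc.memLp_deriv
  have hLp : MemLp (deriv u) 2 (volume.restrict (Ioo a c)) :=
    (memLp_two_Ioo_iff (hle.trans hle')).2 ⟨hint.trans hint', hint_sq.trans hint_sq'⟩
  refine ((memH1_primitive hLp (hle.trans hle')).const_add (u a)).congr (hle.trans hle') ?_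
  intro x hx
  change u x = u a + ∫ t in a..x, deriv u t
  rcases le_total x b with hxb | hbx
  · have hax := hab.absolutelyContinuous.mono
      (by rw [uIcc_of_le hx.1, uIcc_of_le hle]; exact Icc_subset_Icc_right hxb)
    rw [hax.integral_deriv_eq_sub, add_sub_cancel]
  · have hbx' := hbc.absolutelyContinuous.mono
      (by rw [uIcc_of_le hbx, uIcc_of_le hle']; exact Icc_subset_Icc_right hx.2)
    rw [← intervalIntegral.integral_add_adjacent_intervals hint hbx'.intervalIntegrable_deriv,
      hbx'.integral_deriv_eq_sub, hab.absolutelyContinuous.integral_deriv_eq_sub]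
    ring

lemma MemH1.integral_sq_le_of_left_eq_zero (hu : MemH1 u a b) (hab : a ≤ b) (hua : u a = 0) :
    ∫ x in Ioo a b, u x ^ 2 ≤ (b - a) ^ 2 * ∫ x in Ioo a b, deriv u x ^ 2 := by
  have pointwise : ∀ x ∈ Ioo a b, u x ^ 2 ≤ (b - a) * ∫ t in Ioo a b, deriv u t ^ 2 := by
    intro x hx
    have hux := hu.mono le_rfl hx.1.le hx.2.le
    have cauchy_schwarz := sq_integral_mul_le (memLp_const (1 : ℝ)) hux.memLp_deriv
    simp only [one_mul, one_pow, hux.integral_deriv_eq_sub hx.1.le, hua, sub_zero, integral_const,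
      measureReal_restrict_apply_univ, Real.volume_real_Ioo_of_le hx.1.le, smul_eq_mul,
      mul_one] at cauchy_schwarz
    refine cauchy_schwarz.trans (mul_le_mul (by linarith [hx.2]) ?_ ?_ (by linarith))
    · exact setIntegral_mono_set hu.memLp_deriv.integrable_sq (ae_of_all _ fun _ => sq_nonneg _)
        (Ioo_subset_Ioo_right hx.2.le).eventuallyLE
    · exact integral_nonneg fun _ => sq_nonneg _
  calc ∫ x in Ioo a b, u x ^ 2
      ≤ ∫ _ in Ioo a b, (b - a) * ∫ t in Ioo a b, deriv u t ^ 2 :=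
        setIntegral_mono_on hu.memLp.integrable_sq
          (integrableOn_const (by simp)) measurableSet_Ioo pointwise
    _ = (b - a) ^ 2 * ∫ x in Ioo a b, deriv u x ^ 2 := by
        rw [integral_const, measureReal_restrict_apply_univ, Real.volume_real_Ioo_of_le hab,
          smul_eq_mul]
        ring

lemma le_of_sq_le_mul {x y : ℝ} (hy : 0 ≤ y) (h : x ^ 2 ≤ y * x) : x ≤ y := by
  by_contra! hlt
  nlinarith

lemma ip0_sub_right {f g k : ℝ → ℝ} (hf : MemLp f 2 (volume.restrict (Ioo 0 1)))
    (hg : MemLp g 2 (volume.restrict (Ioo 0 1))) (hk : MemLp k 2 (volume.restrict (Ioo 0 1))) :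
    ip0 f (g - k) = ip0 f g - ip0 f k := by
  simp only [ip0, Pi.sub_apply, mul_sub]
  exact integral_sub (hf.integrable_mul hg) (hf.integrable_mul hk)

lemma l2normSq_nonneg (u : ℝ → ℝ) : 0 ≤ l2normSq u :=
  integral_nonneg fun _ => sq_nonneg _

lemma h1semiSq_nonneg (u : ℝ → ℝ) : 0 ≤ h1semiSq u :=
  l2normSq_nonneg (deriv u)

-- Aubin–Nitsche duality: `‖r‖² = -(r', R - z)` for the primitive `R` of `r`.
lemma MemH1.mul_l2normSq_le_h1semiSq {r z : ℝ → ℝ} (hr : MemH1 r 0 1)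
    (hz : MemLp z 2 (volume.restrict (Ioo 0 1))) (hbdry : r 1 * ∫ t in (0 : ℝ)..1, r t = 0)
    (horth : ip0 (deriv r) z = 0) (hc : 0 ≤ c)
    (happrox : c * l2normSq ((fun x => ∫ t in (0 : ℝ)..x, r t) - z) ≤ l2normSq r) :
    c * l2normSq r ≤ h1semiSq r := by
  set R : ℝ → ℝ := fun x => ∫ t in (0 : ℝ)..x, r t
  have hR : MemH1 R 0 1 := memH1_primitive hr.memLp zero_le_one
  have by_parts : l2normSq r = -ip0 (deriv r) R := by
    have hrR : l2normSq r = ip0 r (deriv R) := by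
      refine integral_congr_ae ?_
      filter_upwards [deriv_primitive_ae hr.memLp zero_le_one] with x hx
      rw [hx, sq]
    rw [hrR, ip0, hr.integral_mul_deriv hR zero_le_one, hbdry]
    simp [R, ip0]
  have orthogonality : ip0 (deriv r) R = ip0 (deriv r) (R - z) := by
    rw [ip0_sub_right hr.memLp_deriv hR.memLp hz, horth, sub_zero]
  have cauchy_schwarz : l2normSq r ^ 2 ≤ h1semiSq r * l2normSq (R - z) := by
    rw [by_parts, orthogonality, neg_sq]
    exact sq_integral_mul_le hr.memLp_deriv (hR.memLp.sub hz)
  refine le_of_sq_le_mul (h1semiSq_nonneg r) ?_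
  calc (c * l2normSq r) ^ 2 = c ^ 2 * l2normSq r ^ 2 := mul_pow _ _ _
    _ ≤ c ^ 2 * (h1semiSq r * l2normSq (R - z)) := by gcongr
    _ = h1semiSq r * c * (c * l2normSq (R - z)) := by ring
    _ ≤ h1semiSq r * c * l2normSq r := by
        gcongr
        exact mul_nonneg (h1semiSq_nonneg r) hc
    _ = h1semiSq r * (c * l2normSq r) := by ring

end H1

section Pieces

variable {m j : ℕ} {x : ℝ}

lemma mem_pieceSet_iff (hj : j < m) :
    x ∈ pieceSet m j ↔ (j = 0 ∨ (j : ℝ) / m ≤ x) ∧ (j + 1 = m ∨ x ≤ ((j : ℝ) + 1) / m) := by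
  have hlast : j = m - 1 ↔ j + 1 = m := by omega
  simp only [pieceSet, hlast]
  by_cases h0 : j = 0 <;> by_cases h1 : j + 1 = m
  · subst h0 h1
    simpa using (le_or_gt x 1).imp_right fun h => zero_le_one.trans h.le
  · subst h0
    rw [zero_add] at h1
    simp [h1]
  · subst h1
    simpa [h0] using fun h _ => h
  · simp [h0, h1]

lemma Icc_subset_pieceSet (hj : j < m) :
    Icc ((j : ℝ) / m) (((j : ℝ) + 1) / m) ⊆ pieceSet m j :=
  fun _ hx => (mem_pieceSet_iff hj).2 ⟨.inr hx.1, .inr hx.2⟩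

lemma convex_pieceSet (hj : j < m) : Convex ℝ (pieceSet m j) := by
  refine OrdConnected.convex ⟨fun x hx y hy z hz => ?_⟩
  rw [mem_pieceSet_iff hj] at *
  exact ⟨hx.1.imp_right hz.1.trans', hy.2.imp_right hz.2.trans⟩

lemma isClosed_pieceSet : IsClosed (pieceSet m j) := by
  unfold pieceSet
  split_ifs
  · exact isClosed_Iic.union isClosed_Ici
  · exact isClosed_Iic.union isClosed_empty
  · exact isClosed_Icc.union isClosed_Ici
  · exact isClosed_Icc.union isClosed_empty

lemma pieceSet_subset_closure_interior (hj : j < m) :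
    pieceSet m j ⊆ closure (interior (pieceSet m j)) := by
  have hm : (0 : ℝ) < m := Nat.cast_pos.2 (by omega)
  have hopen : Ioo ((j : ℝ) / m) (((j : ℝ) + 1) / m) ⊆ interior (pieceSet m j) :=
    interior_maximal (Ioo_subset_Icc_self.trans (Icc_subset_pieceSet hj)) isOpen_Ioo
  have hne : (interior (pieceSet m j)).Nonempty :=
    (nonempty_Ioo.2 (by gcongr; exact lt_add_one _)).mono hopen
  rw [(convex_pieceSet hj).closure_interior_eq_closure_of_nonempty_interior hne]
  exact subset_closure

lemma exists_mem_pieceSet [NeZero m] (x : ℝ) : ∃ j < m, x ∈ pieceSet m j := by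
  have hm : 0 < m := Nat.pos_of_neZero m
  have hm' : (0 : ℝ) < m := Nat.cast_pos.2 hm
  have hj : min ⌊x * m⌋₊ (m - 1) < m := by omega
  refine ⟨_, hj, (mem_pieceSet_iff hj).2 ⟨or_iff_not_imp_left.2 fun h0 => ?_,
    or_iff_not_imp_left.2 fun hlast => ?_⟩⟩
  · rw [div_le_iff₀ hm']
    exact (Nat.le_floor_iff' h0).1 (min_le_left _ _)
  · rw [le_div_iff₀ hm', min_eq_left (by omega)]
    exact (Nat.lt_floor_add_one _).le

lemma exists_pieceSet_mem_nhds [NeZero m] (hx : x ∉ Ioo 0 1) :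
    ∃ j < m, pieceSet m j ∈ nhds x := by
  have hm : 0 < m := Nat.pos_of_neZero m
  have hm' : (0 : ℝ) < m := Nat.cast_pos.2 hm
  rcases le_or_gt x 0 with hx0 | hx0
  · refine ⟨0, hm, Filter.mem_of_superset (Iio_mem_nhds (hx0.trans_lt (one_div_pos.2 hm')))
      fun y hy => (mem_pieceSet_iff hm).2 ⟨.inl rfl, .inr ?_⟩⟩
    simpa using (mem_Iio.1 hy).le
  · have hx1 : 1 ≤ x := not_lt.1 fun h => hx ⟨hx0, h⟩
    have hlast : ((m - 1 : ℕ) : ℝ) / m < 1 :=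
      (div_lt_one hm').2 (Nat.cast_lt.2 (Nat.sub_lt hm one_pos))
    exact ⟨m - 1, Nat.sub_lt hm one_pos, Filter.mem_of_superset
      (Ioi_mem_nhds (hlast.trans_le hx1)) fun y hy =>
        (mem_pieceSet_iff (Nat.sub_lt hm one_pos)).2 ⟨.inr hy.le, .inl (Nat.sub_add_cancel hm)⟩⟩

lemma knot_le_knot_succ (m j : ℕ) : (j : ℝ) / m ≤ ((j : ℝ) + 1) / m := by
  gcongr
  exact (lt_add_one _).le

lemma knot_succ_le_one (hj : j < m) : ((j : ℝ) + 1) / m ≤ 1 :=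
  div_le_one_of_le₀ (by exact_mod_cast hj) m.cast_nonneg

lemma sum_integral_pieces [NeZero m] {f : ℝ → ℝ} (hf : IntegrableOn f (Ioo 0 1)) :
    ∑ j ∈ Finset.range m, ∫ x in Ioo ((j : ℝ) / m) (((j : ℝ) + 1) / m), f x =
      ∫ x in Ioo (0 : ℝ) 1, f x := by
  have hm' : (m : ℝ) ≠ 0 := NeZero.ne _
  have hint : IntervalIntegrable f volume 0 1 :=
    (intervalIntegrable_iff_integrableOn_Ioo_of_le zero_le_one).2 hf
  have hsum := intervalIntegral.sum_integral_adjacent_intervals (μ := volume) (f := f)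
    (a := fun j : ℕ => (j : ℝ) / m) (n := m) fun j hj => by
      refine hint.mono_set ?_
      rw [uIcc_of_le zero_le_one, Nat.cast_succ, uIcc_of_le (knot_le_knot_succ m j)]
      exact Icc_subset_Icc (by positivity) (knot_succ_le_one hj)
  simp only [Nat.cast_add, Nat.cast_one, Nat.cast_zero, div_self hm', zero_div] at hsum
  rw [integral_Ioo_eq_intervalIntegral zero_le_one, ← hsum]
  exact Finset.sum_congr rfl fun j _ => integral_Ioo_eq_intervalIntegral (knot_le_knot_succ m j) f

lemma integral_le_mul_integral_of_pieces [NeZero m] {f g : ℝ → ℝ} {c : ℝ}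
    (hf : IntegrableOn f (Ioo 0 1)) (hg : IntegrableOn g (Ioo 0 1))
    (hfg : ∀ j < m, ∫ x in Ioo ((j : ℝ) / m) (((j : ℝ) + 1) / m), f x ≤
      c * ∫ x in Ioo ((j : ℝ) / m) (((j : ℝ) + 1) / m), g x) :
    ∫ x in Ioo (0 : ℝ) 1, f x ≤ c * ∫ x in Ioo (0 : ℝ) 1, g x := by
  rw [← sum_integral_pieces (m := m) hf, ← sum_integral_pieces (m := m) hg, Finset.mul_sum]
  exact Finset.sum_le_sum fun j hj => hfg j (Finset.mem_range.1 hj)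

end Pieces

section PiecewisePolynomials

open Polynomial

variable {m p : ℕ} {u : ℝ → ℝ}

/-- The functions that agree with a polynomial of degree at most `p` on every piece of the
partition. -/
def piecewisePolynomials (m p : ℕ) : Submodule ℝ (ℝ → ℝ) where
  carrier := {u | ∀ j < m, ∃ q : ℝ[X], q.natDegree ≤ p ∧ ∀ x ∈ pieceSet m j, u x = q.eval x}
  add_mem' := by
    intro u v hu hv j hj
    obtain ⟨q, hq, huq⟩ := hu j hj
    obtain ⟨r, hr, hvr⟩ := hv j hj
    exact ⟨q + r, natDegree_add_le_of_degree_le hq hr, fun x hx => by simp [huq x hx, hvr x hx]⟩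
  zero_mem' := fun _ _ => ⟨0, by simp⟩
  smul_mem' := by
    intro c u hu j hj
    obtain ⟨q, hq, huq⟩ := hu j hj
    exact ⟨c • q, (natDegree_smul_le c q).trans hq, fun x hx => by simp [huq x hx]⟩

instance [NeZero m] : FiniteDimensional ℝ (piecewisePolynomials m p) := by
  choose index index_lt mem_index using exists_mem_pieceSet (m := m)
  let evalCoeffs : (Fin m → Fin (p + 1) → ℝ) →ₗ[ℝ] (ℝ → ℝ) :=
    { toFun := fun a x => ∑ i, a ⟨index x, index_lt x⟩ i * x ^ (i : ℕ)
      map_add' := fun a a' => by ext x; simp [add_mul, Finset.sum_add_distrib]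
      map_smul' := fun c a => by ext x; simp [mul_assoc, Finset.mul_sum] }
  refine Submodule.finiteDimensional_of_le (S₂ := evalCoeffs.range) fun u hu => ?_
  choose! q natDegree_q u_eq using hu
  refine ⟨fun j i => (q j).coeff i, funext fun x => ?_⟩
  rw [u_eq _ (index_lt x) x (mem_index x),
    eval_eq_sum_range' (Nat.lt_succ_of_le (natDegree_q _ (index_lt x))),
    ← Fin.sum_univ_eq_sum_range]
  rfl

lemma contDiff_eval {n : WithTop ℕ∞} (q : ℝ[X]) : ContDiff ℝ n (fun x => q.eval x) := by
  simpa using q.contDiff_aeval (𝕜 := ℝ) n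

lemma continuous_of_mem_piecewisePolynomials [NeZero m] (hu : u ∈ piecewisePolynomials m p) :
    Continuous u := by
  refine (locallyFinite_of_finite fun j : Fin m => pieceSet m j).continuous
    (iUnion_eq_univ_iff.2 fun x => ?_) (fun _ => isClosed_pieceSet) fun j => ?_
  · obtain ⟨j, hj, hx⟩ := exists_mem_pieceSet (m := m) x
    exact ⟨⟨j, hj⟩, hx⟩
  · obtain ⟨q, -, huq⟩ := hu j j.2
    exact q.continuous.continuousOn.congr huq

lemma memH1_of_mem_piecewisePolynomials [NeZero m] (hu : u ∈ piecewisePolynomials m p) :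
    MemH1 u 0 1 := by
  have hpiece : ∀ j < m, MemH1 u ((j : ℝ) / m) (((j : ℝ) + 1) / m) := by
    intro j hj
    obtain ⟨q, -, huq⟩ := hu j hj
    exact (memH1_of_contDiff (contDiff_eval q)).congr (knot_le_knot_succ m j) fun x hx =>
      huq x (Icc_subset_pieceSet hj hx)
  have hknot : ∀ j ≤ m, MemH1 u 0 ((j : ℝ) / m) := by
    intro j hj
    induction j with
    | zero =>
      simpa using (memH1_of_contDiff contDiff_const).congr (u := u) (v := fun _ => u 0) le_rfl
        (by simp)
    | succ j ih =>
      simpa using (ih (by omega)).trans (hpiece j hj) (by positivity) (knot_le_knot_succ m j)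
  simpa using hknot m le_rfl

lemma deriv_mem_piecewisePolynomials (hu : u ∈ piecewisePolynomials m (p + 1))
    (hu' : Continuous (deriv u)) : deriv u ∈ piecewisePolynomials m p := by
  intro j hj
  obtain ⟨q, hq, huq⟩ := hu j hj
  refine ⟨derivative q, (natDegree_derivative_le q).trans (by omega), ?_⟩
  have hinterior : EqOn (deriv u) (fun x => (derivative q).eval x) (interior (pieceSet m j)) := by
    intro x hx
    have huq_near : u =ᶠ[nhds x] fun y => q.eval y := by
      filter_upwards [mem_interior_iff_mem_nhds.1 hx] with y hy using huq y hy
    rw [huq_near.deriv_eq, Polynomial.deriv]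
  exact fun x hx => hinterior.closure hu' (by fun_prop) (pieceSet_subset_closure_interior hj hx)

lemma exists_derivative_eq (q : ℝ[X]) :
    ∃ Q : ℝ[X], Q.natDegree ≤ q.natDegree + 1 ∧ derivative Q = q := by
  refine ⟨∑ i ∈ Finset.range (q.natDegree + 1), C (q.coeff i / (i + 1)) * X ^ (i + 1), ?_, ?_⟩
  · refine natDegree_sum_le_of_forall_le _ _ fun i hi => ?_
    exact (natDegree_C_mul_X_pow_le _ _).trans (Finset.mem_range.1 hi)
  · conv_rhs => rw [q.as_sum_range_C_mul_X_pow]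
    simp only [derivative_sum, derivative_C_mul_X_pow]
    refine Finset.sum_congr rfl fun i _ => ?_
    congr 2
    push_cast
    field_simp

lemma mem_piecewisePolynomials_of_deriv_mem (hu : Differentiable ℝ u)
    (hu' : deriv u ∈ piecewisePolynomials m p) : u ∈ piecewisePolynomials m (p + 1) := by
  intro j hj
  obtain ⟨q, hq, huq⟩ := hu' j hj
  obtain ⟨Q, hQ, rfl⟩ := exists_derivative_eq q
  have hleft : (j : ℝ) / m ∈ pieceSet m j :=
    Icc_subset_pieceSet hj (left_mem_Icc.2 (knot_le_knot_succ m j))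
  refine ⟨Q + C (u ((j : ℝ) / m) - Q.eval ((j : ℝ) / m)), ?_, fun x hx => ?_⟩
  · rw [natDegree_add_C]
    omega
  · have hconst := (convex_pieceSet hj).norm_image_sub_le_of_norm_deriv_le
      (f := fun x => u x - Q.eval x) (C := 0) (fun x _ => by fun_prop)
      (fun x hx => by simp [deriv_fun_sub (hu x) Q.differentiableAt, huq x hx]) hleft hx
    rw [zero_mul, norm_le_zero_iff, sub_eq_zero] at hconst
    rw [eval_add, eval_C]
    linarith

lemma exists_eqOn_affine_of_mem_piecewisePolynomials_one (hu : u ∈ piecewisePolynomials m 1)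
    {j : ℕ} (hj : j < m) :
    ∃ A B : ℝ, EqOn u (fun x => A + B * x) (Ioo ((j : ℝ) / m) (((j : ℝ) + 1) / m)) ∧
      EqOn (deriv u) (fun _ => B) (Ioo ((j : ℝ) / m) (((j : ℝ) + 1) / m)) := by
  obtain ⟨q, hq, huq⟩ := hu j hj
  have hu_affine : EqOn u (fun x => q.coeff 0 + q.coeff 1 * x)
      (Ioo ((j : ℝ) / m) (((j : ℝ) + 1) / m)) := by
    intro x hx
    rw [huq x (Icc_subset_pieceSet hj (Ioo_subset_Icc_self hx)),
      eq_X_add_C_of_natDegree_le_one hq]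
    simp [add_comm]
  refine ⟨q.coeff 0, q.coeff 1, hu_affine, fun x hx => ?_⟩
  rw [(hu_affine.eventuallyEq_of_mem (isOpen_Ioo.mem_nhds hx)).deriv_eq]
  simp

end PiecewisePolynomials

section ParitySplines

variable {m n b p : ℕ} {u : ℝ → ℝ}

/-- The splines of degree `n + 1` and smoothness `n` whose derivatives of order `k ≤ n` vanish at
both endpoints whenever `k + b` is even. For `b = 1` this is the space `S₀` of degree `n + 1`;
differentiation maps parity `b` to parity `b + 1`, which allows induction on the degree. -/
def paritySplines (m n b : ℕ) : Submodule ℝ (ℝ → ℝ) where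
  carrier := {u | ContDiff ℝ n u ∧ u ∈ piecewisePolynomials m (n + 1) ∧
    ∀ k ≤ n, Even (k + b) → iteratedDeriv k u 0 = 0 ∧ iteratedDeriv k u 1 = 0}
  add_mem' := by
    rintro u v ⟨hu, hu_poly, hu_bdry⟩ ⟨hv, hv_poly, hv_bdry⟩
    refine ⟨hu.add hv, add_mem hu_poly hv_poly, fun k hk hkb => ?_⟩
    have hkn : (k : WithTop ℕ∞) ≤ n := by exact_mod_cast hk
    simp [iteratedDeriv_add (hu.of_le hkn).contDiffAt (hv.of_le hkn).contDiffAt,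
      hu_bdry k hk hkb, hv_bdry k hk hkb]
  zero_mem' := by
    refine ⟨contDiff_zero_fun, zero_mem _, fun k _ _ => ?_⟩
    simp [iteratedDeriv_const_zero]
  smul_mem' := by
    rintro c u ⟨hu, hu_poly, hu_bdry⟩
    refine ⟨contDiff_const.smul hu, Submodule.smul_mem _ c hu_poly, fun k hk hkb => ?_⟩
    simp [iteratedDeriv_const_smul_field, hu_bdry k hk hkb]

lemma paritySplines_le_piecewisePolynomials :
    paritySplines m n b ≤ piecewisePolynomials m (n + 1) :=
  fun _ hu => hu.2.1

instance [NeZero m] : FiniteDimensional ℝ (paritySplines m n b) :=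
  Submodule.finiteDimensional_of_le paritySplines_le_piecewisePolynomials

lemma memH1_of_mem_paritySplines [NeZero m] (hu : u ∈ paritySplines m n b) : MemH1 u 0 1 :=
  memH1_of_mem_piecewisePolynomials (paritySplines_le_piecewisePolynomials hu)

lemma const_mem_paritySplines (hb : ¬ Even b) (c : ℝ) : (fun _ => c) ∈ paritySplines m n b := by
  refine ⟨contDiff_const, fun _ _ => ⟨.C c, by simp⟩, fun k _ hkb => ?_⟩
  have hk : k ≠ 0 := by rintro rfl; exact hb (by simpa using hkb)
  simp [iteratedDeriv_const, hk]

lemma mem_paritySplines_succ_iff :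
    u ∈ paritySplines m (n + 1) b ↔ Differentiable ℝ u ∧ deriv u ∈ paritySplines m n (b + 1) ∧
      (Even b → u 0 = 0 ∧ u 1 = 0) := by
  have contDiff_iff : ContDiff ℝ (n + 1 : ℕ) u ↔ Differentiable ℝ u ∧ ContDiff ℝ n (deriv u) := by
    rw [Nat.cast_succ, contDiff_succ_iff_deriv]
    simp
  constructor
  · rintro ⟨hu, hu_poly, hu_bdry⟩
    obtain ⟨hdiff, hderiv⟩ := contDiff_iff.1 hu
    refine ⟨hdiff, ⟨hderiv, deriv_mem_piecewisePolynomials hu_poly hderiv.continuous,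
      fun k hk hkb => ?_⟩, fun hb => ?_⟩
    · rw [← iteratedDeriv_succ']
      exact hu_bdry (k + 1) (by omega) (by rwa [add_right_comm])
    · simpa using hu_bdry 0 (Nat.zero_le _) (by simpa using hb)
  · rintro ⟨hdiff, ⟨hderiv, hderiv_poly, hderiv_bdry⟩, hu_bdry⟩
    refine ⟨contDiff_iff.2 ⟨hdiff, hderiv⟩,
      mem_piecewisePolynomials_of_deriv_mem hdiff hderiv_poly, fun k hk hkb => ?_⟩
    cases k with
    | zero => simpa using hu_bdry (by simpa using hkb)
    | succ k =>
      rw [iteratedDeriv_succ']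
      exact hderiv_bdry k (by omega) (by rwa [add_right_comm] at hkb)

lemma IsSpline.contDiff [NeZero m] (hu : IsSpline m p u) : ContDiff ℝ (p - 1 : ℕ) u := by
  rw [contDiff_iff_contDiffAt]
  intro x
  by_cases hx : x ∈ Ioo 0 1
  · exact hu.1.contDiffAt (isOpen_Ioo.mem_nhds hx)
  · obtain ⟨j, hj, hjx⟩ := exists_pieceSet_mem_nhds (m := m) hx
    obtain ⟨q, -, huq⟩ := hu.2 j hj
    refine (contDiff_eval q).contDiffAt.congr_of_eventuallyEq ?_
    filter_upwards [hjx] with y hy using huq y hy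

lemma isSpline0_succ_iff_mem_paritySplines [NeZero m] :
    IsSpline0 m (n + 1) u ↔ u ∈ paritySplines m n 1 := by
  constructor
  · rintro ⟨hu, hu_bdry⟩
    refine ⟨hu.contDiff, hu.2, fun k hk hk_even => ?_⟩
    obtain ⟨l, rfl⟩ : Odd k := by simpa [Nat.even_add_one] using hk_even
    exact hu_bdry l (by omega)
  · rintro ⟨hu, hu_poly, hu_bdry⟩
    exact ⟨⟨hu.contDiffOn, hu_poly⟩, fun l hl => hu_bdry _ (by omega) ⟨l + 1, by ring⟩⟩

end ParitySplines

section InverseInequality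

variable {m n b : ℕ} {u : ℝ → ℝ}

lemma integral_slope_sq_le_integral_affine_sq {s t : ℝ} (hst : s ≤ t) (A B : ℝ) :
    (t - s) ^ 2 * ∫ _ in Ioo s t, B ^ 2 ≤ 12 * ∫ x in Ioo s t, (A + B * x) ^ 2 := by
  have integral_affine_sq : ∫ x in s..t, (A + B * x) ^ 2 =
      A ^ 2 * (t - s) + A * B * (t ^ 2 - s ^ 2) + B ^ 2 * (t ^ 3 - s ^ 3) / 3 := by
    have hderiv : ∀ x ∈ uIcc s t, HasDerivAt
        (fun x => A ^ 2 * x + A * B * x ^ 2 + B ^ 2 * x ^ 3 / 3) ((A + B * x) ^ 2) x := by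
      intro x _
      refine ((((hasDerivAt_id x).const_mul (A ^ 2)).add
        ((hasDerivAt_pow 2 x).const_mul (A * B))).add
          (((hasDerivAt_pow 3 x).const_mul (B ^ 2)).div_const 3)).congr_deriv ?_
      norm_num
      ring
    rw [intervalIntegral.integral_eq_sub_of_hasDerivAt hderiv
      (Continuous.intervalIntegrable (by fun_prop) _ _)]
    ring
  rw [integral_Ioo_eq_intervalIntegral hst, integral_Ioo_eq_intervalIntegral hst,
    integral_affine_sq, intervalIntegral.integral_const, smul_eq_mul]
  have midpoint_sq_nonneg : 0 ≤ 3 * (t - s) * (2 * A + B * (s + t)) ^ 2 :=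
    mul_nonneg (by linarith) (sq_nonneg _)
  linear_combination midpoint_sq_nonneg

lemma h1semiSq_le_of_mem_piecewisePolynomials_one [NeZero m] (hu : u ∈ piecewisePolynomials m 1) :
    h1semiSq u ≤ 12 * m ^ 2 * l2normSq u := by
  have hu_H1 := memH1_of_mem_piecewisePolynomials hu
  have hm : (0 : ℝ) < m := Nat.cast_pos.2 (Nat.pos_of_neZero m)
  refine integral_le_mul_integral_of_pieces (m := m) hu_H1.memLp_deriv.integrable_sq
    hu_H1.memLp.integrable_sq fun j hj => ?_
  obtain ⟨A, B, hu_affine, hu_slope⟩ :=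
    exists_eqOn_affine_of_mem_piecewisePolynomials_one hu hj
  have hslope := integral_slope_sq_le_integral_affine_sq (knot_le_knot_succ m j) A B
  rw [add_div, add_sub_cancel_left, div_pow, one_pow, one_div, inv_mul_le_iff₀ (by positivity),
    ← add_div] at hslope
  calc _ = ∫ _ in Ioo ((j : ℝ) / m) (((j : ℝ) + 1) / m), B ^ 2 :=
        setIntegral_congr_fun measurableSet_Ioo fun x hx => by simp only [hu_slope hx]
    _ ≤ m ^ 2 * (12 * ∫ x in Ioo ((j : ℝ) / m) (((j : ℝ) + 1) / m), (A + B * x) ^ 2) := hslope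
    _ = 12 * m ^ 2 * ∫ x in Ioo ((j : ℝ) / m) (((j : ℝ) + 1) / m), (A + B * x) ^ 2 := by ring
    _ = _ := by
        congr 1
        exact setIntegral_congr_fun measurableSet_Ioo fun x hx => by simp only [hu_affine hx]

lemma h1semiSq_sq_le_of_mem_paritySplines_succ [NeZero m] (hu : u ∈ paritySplines m (n + 1) b) :
    h1semiSq u ^ 2 ≤ h1semiSq (deriv u) * l2normSq u := by
  obtain ⟨-, hu', hu_bdry⟩ := mem_paritySplines_succ_iff.1 hu
  have hu_H1 := memH1_of_mem_paritySplines hu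
  have hu'_H1 := memH1_of_mem_paritySplines hu'
  have boundary : deriv u 1 * u 1 = 0 ∧ deriv u 0 * u 0 = 0 := by
    by_cases hb : Even b
    · simp [hu_bdry hb]
    · have := hu'.2.2 0 (Nat.zero_le _) (by simpa [Nat.even_add_one] using hb)
      simp_all
  have by_parts : h1semiSq u = -ip0 (deriv (deriv u)) u := by
    simp only [h1semiSq, sq]
    rw [hu'_H1.integral_mul_deriv hu_H1 zero_le_one, boundary.1, boundary.2]
    simp [ip0]
  rw [by_parts, neg_sq]
  exact sq_integral_mul_le hu'_H1.memLp_deriv hu_H1.memLp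

theorem h1semiSq_le_of_mem_paritySplines [NeZero m] (hu : u ∈ paritySplines m n b) :
    h1semiSq u ≤ 12 * m ^ 2 * l2normSq u := by
  induction n generalizing b u with
  | zero => exact h1semiSq_le_of_mem_piecewisePolynomials_one hu.2.1
  | succ n ih =>
    refine le_of_sq_le_mul (mul_nonneg (by positivity) (l2normSq_nonneg u)) ?_
    calc h1semiSq u ^ 2 ≤ h1semiSq (deriv u) * l2normSq u :=
          h1semiSq_sq_le_of_mem_paritySplines_succ hu
      _ ≤ 12 * m ^ 2 * h1semiSq u * l2normSq u :=
          mul_le_mul_of_nonneg_right (ih (mem_paritySplines_succ_iff.1 hu).2.1) (l2normSq_nonneg u)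
      _ = 12 * m ^ 2 * l2normSq u * h1semiSq u := by ring

end InverseInequality

section LinearInterpolation

variable {m k : ℕ} {r w : ℝ → ℝ}

lemma truncatedPower_mem_piecewisePolynomials (hk : 0 < k) (hkm : k < m) :
    (fun x => max (x - (k : ℝ) / m) 0) ∈ piecewisePolynomials m 1 := by
  intro j hj
  rcases lt_or_ge j k with hjk | hkj
  · refine ⟨0, by simp, fun x hx => ?_⟩
    have hx_le : x ≤ ((j : ℝ) + 1) / m := ((mem_pieceSet_iff hj).1 hx).2.resolve_left (by omega)
    have hjk' : ((j : ℝ) + 1) / m ≤ (k : ℝ) / m := by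
      gcongr
      exact_mod_cast hjk
    simpa using hx_le.trans hjk'
  · refine ⟨.X - .C ((k : ℝ) / m), by simp, fun x hx => ?_⟩
    have hx_ge : (j : ℝ) / m ≤ x := ((mem_pieceSet_iff hj).1 hx).1.resolve_left (by omega)
    have hkj' : (k : ℝ) / m ≤ (j : ℝ) / m := by gcongr
    simpa using hkj'.trans hx_ge

lemma exists_mem_piecewisePolynomials_one_eq_at_knots [NeZero m] (y : ℕ → ℝ) :
    ∃ w ∈ piecewisePolynomials m 1, ∀ j ≤ m, w ((j : ℝ) / m) = y j := by
  have hm : (m : ℝ) ≠ 0 := NeZero.ne _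
  suffices ∀ k, 1 ≤ k → k ≤ m →
      ∃ w ∈ piecewisePolynomials m 1, ∀ j ≤ k, w ((j : ℝ) / m) = y j from
    this m (Nat.pos_of_neZero m) le_rfl
  intro k hk
  induction k, hk using Nat.le_induction with
  | base =>
    refine fun _ => ⟨fun x => y 0 + (y 1 - y 0) * m * x, fun _ _ =>
      ⟨.C (y 0) + .C ((y 1 - y 0) * m) * .X, by compute_degree, by simp⟩, fun j hj => ?_⟩
    interval_cases j
    · simp
    · field_simp
      simp
  | succ k hk ih =>
    intro hkm
    obtain ⟨w, hw, hwy⟩ := ih (by omega)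
    refine ⟨w + ((y (k + 1) - w (((k + 1 : ℕ) : ℝ) / m)) * m) • fun x => max (x - (k : ℝ) / m) 0,
      add_mem hw (Submodule.smul_mem _ _ (truncatedPower_mem_piecewisePolynomials hk hkm)),
      fun j hj => ?_⟩
    rcases hj.eq_or_lt with rfl | hjk
    · have hpow : max (((k + 1 : ℕ) : ℝ) / m - (k : ℝ) / m) 0 = 1 / m := by
        rw [← sub_div, Nat.cast_succ, add_sub_cancel_left]
        exact max_eq_left (by positivity)
      simp only [Pi.add_apply, Pi.smul_apply, smul_eq_mul, hpow]
      field_simp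
      ring
    · have hpow : max ((j : ℝ) / m - (k : ℝ) / m) 0 = 0 := by
        refine max_eq_right (sub_nonpos.2 ?_)
        gcongr
        omega
      simp [hpow, hwy j (by omega)]

lemma MemH1.sq_mul_l2normSq_le_of_eq_zero_at_knots [NeZero m] (hr : MemH1 r 0 1)
    (hknots : ∀ j < m, r ((j : ℝ) / m) = 0) : m ^ 2 * l2normSq r ≤ h1semiSq r := by
  have hm : (0 : ℝ) < m := Nat.cast_pos.2 (Nat.pos_of_neZero m)
  rw [← le_inv_mul_iff₀ (by positivity)]
  refine integral_le_mul_integral_of_pieces (m := m) hr.memLp.integrable_sq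
    hr.memLp_deriv.integrable_sq fun j hj => ?_
  have hfriedrichs := (hr.mono (by positivity) (knot_le_knot_succ m j)
    (knot_succ_le_one hj)).integral_sq_le_of_left_eq_zero (knot_le_knot_succ m j) (hknots j hj)
  rwa [← sub_div, add_sub_cancel_left, one_div, inv_pow] at hfriedrichs

lemma MemH1.ip0_deriv_eq_zero_of_eq_zero_at_knots [NeZero m] (hr : MemH1 r 0 1)
    (hknots : ∀ j ≤ m, r ((j : ℝ) / m) = 0) (hw : w ∈ piecewisePolynomials m 1) :
    ip0 (deriv r) (deriv w) = 0 := by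
  have hw_H1 := memH1_of_mem_piecewisePolynomials hw
  have hint : IntegrableOn (fun x => deriv r x * deriv w x) (Ioo 0 1) :=
    hr.memLp_deriv.integrable_mul hw_H1.memLp_deriv
  rw [ip0, ← sum_integral_pieces (m := m) hint]
  refine Finset.sum_eq_zero fun j hj => ?_
  have hj := Finset.mem_range.1 hj
  obtain ⟨-, B, -, hw_slope⟩ := exists_eqOn_affine_of_mem_piecewisePolynomials_one hw hj
  have hr_piece := hr.mono (by positivity) (knot_le_knot_succ m j) (knot_succ_le_one hj)
  have hright : r (((j : ℝ) + 1) / m) = 0 := by simpa using hknots (j + 1) hj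
  calc _ = ∫ x in Ioo ((j : ℝ) / m) (((j : ℝ) + 1) / m), deriv r x * B :=
        setIntegral_congr_fun measurableSet_Ioo fun x hx => by simp only [hw_slope hx]
    _ = 0 := by
        rw [integral_mul_const, hr_piece.integral_deriv_eq_sub (knot_le_knot_succ m j), hright,
          hknots j hj.le, sub_zero, zero_mul]

end LinearInterpolation

section Approximation

variable {m n b : ℕ} {F w y : ℝ → ℝ}

lemma MemH1.h1semiSq_sub_add_h1semiSq (hF : MemH1 F 0 1) (hw : MemH1 w 0 1)
    (horth : ip0 (deriv (F - w)) (deriv w) = 0) :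
    h1semiSq (F - w) + h1semiSq w = h1semiSq F := by
  refine (integral_add_sq_of_integral_mul_eq_zero (hF.sub hw).memLp_deriv hw.memLp_deriv
    horth).symm.trans (integral_congr_ae ?_)
  filter_upwards [hF.deriv_sub_ae hw] with x hx
  simp [hx]

lemma exists_mem_paritySplines_zero_approx [NeZero m] (hF : MemH1 F 0 1)
    (hF_bdry : Even b → F 0 = 0 ∧ F 1 = 0) :
    ∃ w ∈ paritySplines m 0 b, m ^ 2 * l2normSq (F - w) ≤ h1semiSq (F - w) ∧
      ip0 (deriv (F - w)) (deriv w) = 0 := by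
  have hm : (m : ℝ) ≠ 0 := NeZero.ne _
  obtain ⟨w, hw, hw_knots⟩ :=
    exists_mem_piecewisePolynomials_one_eq_at_knots (m := m) fun j => F ((j : ℝ) / m)
  have hw_left : w 0 = F 0 := by simpa using hw_knots 0 (Nat.zero_le _)
  have hw_right : w 1 = F 1 := by simpa [hm] using hw_knots m le_rfl
  have hr := hF.sub (memH1_of_mem_piecewisePolynomials hw)
  have hr_knots : ∀ j ≤ m, (F - w) ((j : ℝ) / m) = 0 := fun j hj =>
    sub_eq_zero.2 (hw_knots j hj).symm
  refine ⟨w, ⟨contDiff_zero.2 (continuous_of_mem_piecewisePolynomials hw), hw, fun k hk hkb => ?_⟩,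
    hr.sq_mul_l2normSq_le_of_eq_zero_at_knots fun j hj => hr_knots j hj.le,
    hr.ip0_deriv_eq_zero_of_eq_zero_at_knots hr_knots hw⟩
  obtain rfl : k = 0 := Nat.le_zero.1 hk
  simpa [hw_left, hw_right] using hF_bdry (by simpa using hkb)

lemma const_add_primitive_mem_paritySplines_succ (hy : y ∈ paritySplines m n (b + 1)) {c : ℝ}
    (hc : Even b → c = 0 ∧ ∫ t in (0 : ℝ)..1, y t = 0) :
    (fun x => c + ∫ t in (0 : ℝ)..x, y t) ∈ paritySplines m (n + 1) b := by
  have hderiv : ∀ x, HasDerivAt (fun x => c + ∫ t in (0 : ℝ)..x, y t) (y x) x := fun x =>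
    (hy.1.continuous.integral_hasStrictDerivAt 0 x).hasDerivAt.const_add c
  refine mem_paritySplines_succ_iff.2 ⟨fun x => (hderiv x).differentiableAt, ?_, fun hb => ?_⟩
  · rwa [funext fun x => (hderiv x).deriv]
  · simp [hc hb]

-- `w` is the `H¹`-orthogonal projection: `w'` is the `L²`-projection of `F'`, and the constant of
-- integration is fixed by the boundary values or by the mean value.
lemma exists_mem_paritySplines_succ_orthogonal [NeZero m] (hF : MemH1 F 0 1)
    (hF_bdry : Even b → F 0 = 0 ∧ F 1 = 0) :
    ∃ w ∈ paritySplines m (n + 1) b,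
      (∀ z ∈ paritySplines m n (b + 1), ip0 (deriv (F - w)) z = 0) ∧
      (¬ Even b → ∫ x in (0 : ℝ)..1, (F - w) x = 0) := by
  obtain ⟨y, hy, hy_orth⟩ := exists_mem_forall_integral_sub_mul_eq_zero
    (V := paritySplines m n (b + 1)) (fun _ hv => (memH1_of_mem_paritySplines hv).memLp)
    hF.memLp_deriv
  have hy_Lp := (memH1_of_mem_paritySplines hy).memLp
  set Y : ℝ → ℝ := fun x => ∫ t in (0 : ℝ)..x, y t
  have hY : MemH1 Y 0 1 := memH1_primitive hy_Lp zero_le_one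
  have hY_right (hb : Even b) : Y 1 = 0 := by
    have horth := hy_orth _ (const_mem_paritySplines (by simpa [Nat.even_add_one] using hb) 1)
    simp only [Pi.sub_apply, mul_one] at horth
    rw [integral_sub (hF.memLp_deriv.integrable one_le_two) (hy_Lp.integrable one_le_two),
      hF.integral_deriv_eq_sub zero_le_one, (hF_bdry hb).1, (hF_bdry hb).2,
      integral_Ioo_eq_intervalIntegral zero_le_one] at horth
    linarith
  set c : ℝ := if Even b then 0 else ∫ x in (0 : ℝ)..1, (F - Y) x
  have hw : (fun x => c + Y x) ∈ paritySplines m (n + 1) b :=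
    const_add_primitive_mem_paritySplines_succ hy fun hb => ⟨if_pos hb, hY_right hb⟩
  refine ⟨_, hw, fun z hz => (integral_congr_ae ?_).trans (hy_orth z hz), fun hb => ?_⟩
  · filter_upwards [hF.deriv_sub_ae (hY.const_add c), deriv_primitive_ae hy_Lp zero_le_one]
      with x hFx hYx
    rw [hFx, Pi.sub_apply, deriv_const_add', hYx, Pi.sub_apply]
  · have hFY := ((memLp_two_Ioo_iff zero_le_one).1 (hF.sub hY).memLp).1
    have hsub : ∀ x, (F - fun x => c + Y x) x = (F - Y) x - c := fun x => by
      simp only [Pi.sub_apply]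
      ring
    simp_rw [hsub]
    rw [intervalIntegral.integral_sub hFY intervalIntegrable_const]
    simp [c, hb]

theorem exists_mem_paritySplines_approx [NeZero m] (hF : MemH1 F 0 1)
    (hF_bdry : Even b → F 0 = 0 ∧ F 1 = 0) :
    ∃ w ∈ paritySplines m n b, m ^ 2 * l2normSq (F - w) ≤ h1semiSq (F - w) ∧
      ip0 (deriv (F - w)) (deriv w) = 0 := by
  induction n generalizing b F with
  | zero => exact exists_mem_paritySplines_zero_approx hF hF_bdry
  | succ n ih =>
    obtain ⟨w, hw, hw_orth, hw_mean⟩ :=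
      exists_mem_paritySplines_succ_orthogonal (n := n) (m := m) hF hF_bdry
    obtain ⟨-, hw', hw_bdry⟩ := mem_paritySplines_succ_iff.1 hw
    have hr := hF.sub (memH1_of_mem_paritySplines hw)
    refine ⟨w, hw, ?_, hw_orth _ hw'⟩
    have hR := memH1_primitive hr.memLp zero_le_one
    obtain ⟨z, hz, hz_approx, hz_orth⟩ := ih (b := b + 1) hR fun hb =>
      ⟨intervalIntegral.integral_same, hw_mean (by simpa [Nat.even_add_one] using hb)⟩
    have hz_H1 := memH1_of_mem_paritySplines hz
    refine hr.mul_l2normSq_le_h1semiSq hz_H1.memLp ?_ (hw_orth z hz) (by positivity) ?_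
    · by_cases hb : Even b
      · simp [hF_bdry hb, hw_bdry hb]
      · rw [hw_mean hb, mul_zero]
    · calc _ ≤ h1semiSq ((fun x => ∫ t in (0 : ℝ)..x, (F - w) t) - z) := hz_approx
        _ ≤ h1semiSq (fun x => ∫ t in (0 : ℝ)..x, (F - w) t) := by
            rw [← hR.h1semiSq_sub_add_h1semiSq hz_H1 hz_orth]
            exact le_add_of_nonneg_right (h1semiSq_nonneg z)
        _ = l2normSq (F - w) := by
            refine integral_congr_ae ?_
            filter_upwards [deriv_primitive_ae hr.memLp zero_le_one] with x hx
            rw [hx]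

end Approximation

section Stability

variable {m n b : ℕ} {u v : ℝ → ℝ}

lemma h1semiSq_sub_comm (u v : ℝ → ℝ) : h1semiSq (u - v) = h1semiSq (v - u) := by
  rw [← neg_sub v u]
  simp only [h1semiSq, deriv.neg', neg_sq]

lemma MemH1.h1semiSq_le_two_mul_add (hu : MemH1 u 0 1) (hv : MemH1 v 0 1) :
    h1semiSq u ≤ 2 * (h1semiSq v + h1semiSq (u - v)) := by
  refine le_of_eq_of_le (integral_congr_ae ?_)
    (integral_add_sq_le hv.memLp_deriv (hu.sub hv).memLp_deriv)
  filter_upwards [hu.deriv_sub_ae hv] with x hx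
  simp [hx]

lemma l2normSq_sub_eq_add_of_ip0_eq_zero {w : ℝ → ℝ} (hu : MemH1 u 0 1) (hv : MemH1 v 0 1)
    (hw : MemH1 w 0 1) (horth : ip0 (u - v) (v - w) = 0) :
    l2normSq (u - w) = l2normSq (u - v) + l2normSq (v - w) := by
  rw [← sub_add_sub_cancel u v w]
  exact integral_add_sq_of_integral_mul_eq_zero (hu.sub hv).memLp (hv.sub hw).memLp horth

lemma h1semiSq_add_h1semiSq_sub_le [NeZero m] (hu : MemH1 u 0 1)
    (hu_bdry : Even b → u 0 = 0 ∧ u 1 = 0) (hv : v ∈ paritySplines m n b)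
    (horth : ∀ w ∈ paritySplines m n b, ip0 (u - v) w = 0) :
    h1semiSq v + h1semiSq (u - v) ≤ 50 * h1semiSq u := by
  have hv_H1 := memH1_of_mem_paritySplines hv
  obtain ⟨w, hw, hw_approx, hw_orth⟩ :=
    exists_mem_paritySplines_approx (m := m) (n := n) hu hu_bdry
  have hw_H1 := memH1_of_mem_paritySplines hw
  have pythagoras : h1semiSq (u - w) + h1semiSq w = h1semiSq u :=
    hu.h1semiSq_sub_add_h1semiSq hw_H1 hw_orth
  have best_approx : l2normSq (v - w) ≤ l2normSq (u - w) := by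
    rw [l2normSq_sub_eq_add_of_ip0_eq_zero hu hv_H1 hw_H1 (horth _ (sub_mem hv hw))]
    exact le_add_of_nonneg_left (l2normSq_nonneg _)
  have inverse : h1semiSq (v - w) ≤ 12 * h1semiSq (u - w) :=
    calc h1semiSq (v - w) ≤ 12 * m ^ 2 * l2normSq (v - w) :=
          h1semiSq_le_of_mem_paritySplines (sub_mem hv hw)
      _ ≤ 12 * m ^ 2 * l2normSq (u - w) := by gcongr
      _ = 12 * (m ^ 2 * l2normSq (u - w)) := mul_assoc _ _ _
      _ ≤ 12 * h1semiSq (u - w) := by gcongr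
  have hv_le : h1semiSq v ≤ 2 * (h1semiSq w + h1semiSq (v - w)) :=
    hv_H1.h1semiSq_le_two_mul_add hw_H1
  have huv_le : h1semiSq (u - v) ≤ 2 * (h1semiSq (u - w) + h1semiSq (v - w)) := by
    have htriangle := (hu.sub hv_H1).h1semiSq_le_two_mul_add (hu.sub hw_H1)
    rwa [sub_sub_sub_cancel_left, h1semiSq_sub_comm w v] at htriangle
  linarith [h1semiSq_nonneg w]

theorem stable_splitting_1d_general :
    ∃ c : ℝ, 0 < c ∧ ∀ m p : ℕ, 1 ≤ m → 1 ≤ p →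
      ∀ u v : ℝ → ℝ, MemH1 u 0 1 → IsL2Proj0 m p u v →
        ((1 / 2 : ℝ) * h1semiSq u ≤ h1semiSq v + h1semiSq (u - v) ∧
          h1semiSq v + h1semiSq (u - v) ≤ c * h1semiSq u) ∧
        (c⁻¹ * h1normSq u ≤ h1normSq v + h1normSq (u - v) ∧
          h1normSq v + h1normSq (u - v) ≤ c * h1normSq u) := by
  refine ⟨50, by norm_num, fun m p hm hp u v hu hproj => ?_⟩
  have : NeZero m := ⟨by omega⟩
  obtain ⟨n, rfl⟩ := Nat.exists_eq_add_of_le' hp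
  simp only [IsL2Proj0, isSpline0_succ_iff_mem_paritySplines] at hproj
  obtain ⟨hv, horth⟩ := hproj
  have hv_H1 := memH1_of_mem_paritySplines hv
  have lower : h1semiSq u ≤ 2 * (h1semiSq v + h1semiSq (u - v)) := hu.h1semiSq_le_two_mul_add hv_H1
  have upper : h1semiSq v + h1semiSq (u - v) ≤ 50 * h1semiSq u :=
    h1semiSq_add_h1semiSq_sub_le hu (by simp) hv horth
  have pythagoras : l2normSq u = l2normSq (u - v) + l2normSq v := by
    simpa using l2normSq_sub_eq_add_of_ip0_eq_zero (w := 0) hu hv_H1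
      (memH1_of_contDiff contDiff_const) (by simpa using horth v hv)
  simp only [h1normSq]
  refine ⟨⟨?_, upper⟩, ?_, ?_⟩ <;> linarith [l2normSq_nonneg u]

end Stability

/-- Theorem `thm:stable-1d`: the `L²`-orthogonal splitting
`S = S₀ ⊕ S₁`, `u = Q₀u + (I − Q₀)u`, is `H¹`-stable uniformly in `h` and `p`:
there is a constant `c > 0` independent of `h = 1/m` and `p` with
`(1/2)|u|₁² ≤ |Q₀u|₁² + |u − Q₀u|₁² ≤ c|u|₁²` and
`c⁻¹‖u‖²_{H¹} ≤ ‖Q₀u‖²_{H¹} + ‖u − Q₀u‖²_{H¹} ≤ c‖u‖²_{H¹}` for all `u ∈ S`. -/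
theorem stable_splitting_1d :
    ∃ c : ℝ, 0 < c ∧ ∀ m p : ℕ, 1 ≤ m → 1 ≤ p →
      ∀ u v : ℝ → ℝ, IsSpline m p u → IsL2Proj0 m p u v →
        ((1 / 2 : ℝ) * h1semiSq u ≤ h1semiSq v + h1semiSq (u - v) ∧
          h1semiSq v + h1semiSq (u - v) ≤ c * h1semiSq u) ∧
        (c⁻¹ * h1normSq u ≤ h1normSq v + h1normSq (u - v) ∧
          h1normSq v + h1normSq (u - v) ≤ c * h1normSq u) := by
  obtain ⟨c, hc, hstable⟩ := stable_splitting_1d_general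
  refine ⟨c, hc, fun m p hm hp u v hu => ?_⟩
  have : NeZero m := ⟨by omega⟩
  exact hstable m p hm hp u v (memH1_of_mem_piecewisePolynomials hu.2)

end SplineMG
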